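/- Let M ≥ 2 and let μ̂_j = A_j y + b_j (j = 1,…,M) be affine estimators with ‖A_j‖_op ≤ 1 for all j, where the noise ξ has i.i.d. N(0,σ²) coordinates. Let θ̂_pen be any minimizer over the simplex Λ^M of H_pen(θ) = C_p(θ) + (1/2)pen(θ). Then for every x > 0, with probability at least 1 − 2exp(−x), ‖μ̂_{θ̂_pen} − f‖² ≤ min_{j=1,…,M} ‖μ̂_j − f‖² + 46σ²(2 log M + x). -/

import Mathlib

open MeasureTheory ProbabilityTheory Finset

noncomputable section

/-- Squared Euclidean norm on `Fin n → ℝ`. -/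
def sqNorm {n : ℕ} (v : Fin n → ℝ) : ℝ := ∑ i, (v i) ^ 2

/-- The simplex `Λ^M` of probability vectors in `ℝ^M`. -/
def simplex (M : ℕ) : Set (Fin M → ℝ) := {θ | (∀ j, 0 ≤ θ j) ∧ ∑ j, θ j = 1}

/-- Operator norm (ℓ²→ℓ²) of a square matrix. -/
def opNorm {n : ℕ} (A : Matrix (Fin n) (Fin n) ℝ) : ℝ :=
  sSup {c | ∃ x : Fin n → ℝ, sqNorm x ≤ 1 ∧ c = Real.sqrt (sqNorm (A.mulVec x))}

/-- The distribution of a vector with i.i.d. `N(0,σ²)` coordinates. -/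
def gaussPi (n : ℕ) (σ : ℝ) : Measure (Fin n → ℝ) :=
  Measure.pi fun _ => gaussianReal 0 ⟨σ ^ 2, sq_nonneg σ⟩

/-- The aggregated affine estimator `μ̂_θ = A_θ y + b_θ = ∑_j θ_j (A_j y + b_j)`. -/
def muV {n M : ℕ} (A : Fin M → Matrix (Fin n) (Fin n) ℝ) (b : Fin M → Fin n → ℝ)
    (y : Fin n → ℝ) (θ : Fin M → ℝ) : Fin n → ℝ :=
  ∑ j, θ j • ((A j).mulVec y + b j)

/-- Mallows' `C_p` criterion. -/
def Cp {n M : ℕ} (A : Fin M → Matrix (Fin n) (Fin n) ℝ) (b : Fin M → Fin n → ℝ)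
    (σ : ℝ) (y : Fin n → ℝ) (θ : Fin M → ℝ) : ℝ :=
  sqNorm (muV A b y θ) - 2 * ∑ i, y i * muV A b y θ i
    + 2 * σ ^ 2 * ∑ j, θ j * (A j).trace

/-- The penalty `pen(θ) = ∑_j θ_j ‖μ̂_θ - μ̂_j‖²`. -/
def pen {n M : ℕ} (A : Fin M → Matrix (Fin n) (Fin n) ℝ) (b : Fin M → Fin n → ℝ)
    (y : Fin n → ℝ) (θ : Fin M → ℝ) : ℝ :=
  ∑ j, θ j * sqNorm (muV A b y θ - ((A j).mulVec y + b j))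

/-- The penalized criterion `H_pen(θ) = C_p(θ) + pen(θ)/2`. -/
def Hpen {n M : ℕ} (A : Fin M → Matrix (Fin n) (Fin n) ℝ) (b : Fin M → Fin n → ℝ)
    (σ : ℝ) (y : Fin n → ℝ) (θ : Fin M → ℝ) : ℝ :=
  Cp A b σ y θ + pen A b y θ / 2

/-! Comparing the minimizer `θ̂` of `H_pen`, which is strongly convex in `μ̂_θ`, with the vertex
`e_j` gives `H_pen(θ̂) + ‖μ̂_θ̂ - μ̂_j‖² / 2 ≤ H_pen(e_j)`. Since
`pen(θ̂) + ‖μ̂_θ̂ - μ̂_j‖² = ∑ₖ θ̂ₖ ‖μ̂ₖ - μ̂_j‖²`, the excess loss over `μ̂_j` is at most the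
`θ̂`-average over `k` of `2 ξᵀ(μ̂ₖ - μ̂_j) - 2σ² Tr(Aₖ - A_j) - ‖μ̂ₖ - μ̂_j‖² / 2`.
For each pair this is a Gaussian chaos of order two, compensated by a quadratic term that makes its
exponential moment at a fixed scale at most one; Markov's inequality and a union bound over the `M²`
pairs conclude.

With `B = Aₖ - A_j`, the exponential moment at scale `a` is a Gaussian integral with a precision
matrix `S`. The elementary bound `exp (-2at) ≤ 1 - 2at + (a / 2) t²`, read in an eigenbasis of `S`,
gives `exp (-2a Tr B) ≤ det S`. -/

open scoped Matrix NNReal Topology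

section GaussianIntegral

variable {ι : Type*} [Fintype ι]

/-- The standard Gaussian measure on `ι → ℝ`, as a product measure. -/
abbrev stdGaussianPi (ι : Type*) [Fintype ι] : Measure (ι → ℝ) :=
  Measure.pi fun _ => gaussianReal 0 1

/-- The Lebesgue density of `stdGaussianPi ι`. -/
def stdGaussianDensity (x : ι → ℝ) : ℝ := ∏ i, gaussianPDFReal 0 1 (x i)

lemma stdGaussianDensity_eq_exp (x : ι → ℝ) :
    stdGaussianDensity x = (√(2 * Real.pi))⁻¹ ^ Fintype.card ι * Real.exp (-(x ⬝ᵥ x) / 2) := by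
  simp only [stdGaussianDensity, gaussianPDFReal, prod_mul_distrib, ← Real.exp_sum]
  simp only [NNReal.coe_one, mul_one, sub_zero, prod_const, card_univ, dotProduct, ← sum_div,
    sum_neg_distrib, pow_two]

lemma measurable_ofReal_stdGaussianDensity :
    Measurable fun x : ι → ℝ => ENNReal.ofReal (stdGaussianDensity x) := by
  unfold stdGaussianDensity
  fun_prop

lemma pi_gaussianReal_eq_withDensity (m : ι → ℝ) {v : ι → ℝ≥0} (hv : ∀ i, v i ≠ 0) :
    (Measure.pi fun i => gaussianReal (m i) (v i)) =
      volume.withDensity fun x => ENNReal.ofReal (∏ i, gaussianPDFReal (m i) (v i) (x i)) := by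
  refine Measure.pi_eq fun s hs => ?_
  rw [withDensity_apply _ (MeasurableSet.univ_pi hs), volume_pi, Measure.restrict_pi_pi,
    ← ofReal_integral_eq_lintegral_ofReal]
  · rw [integral_fintype_prod_eq_prod (𝕜 := ℝ) (f := fun i => gaussianPDFReal (m i) (v i)),
      ENNReal.ofReal_prod_of_nonneg fun i _ =>
        integral_nonneg fun x => gaussianPDFReal_nonneg _ _ x]
    exact prod_congr rfl fun i _ => (gaussianReal_apply_eq_integral _ (hv i) _).symm
  · exact Integrable.fintype_prod fun i => (integrable_gaussianPDFReal (m i) (v i)).restrict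
  · exact ae_of_all _ fun x => prod_nonneg fun i _ => gaussianPDFReal_nonneg _ _ _

lemma stdGaussianPi_eq_withDensity :
    stdGaussianPi ι = volume.withDensity fun x => ENNReal.ofReal (stdGaussianDensity x) :=
  pi_gaussianReal_eq_withDensity 0 fun _ => one_ne_zero

lemma exists_quadratic_le_neg_centered {S : Matrix ι ι ℝ} (hS : S.PosDef) {w : ι → ℝ} {k : ℝ}
    (h : ∀ x, w ⬝ᵥ x - x ⬝ᵥ S *ᵥ x / 2 + k ≤ 0) :
    ∃ x₀, ∀ x, w ⬝ᵥ x - x ⬝ᵥ S *ᵥ x / 2 + k ≤ -((x - x₀) ⬝ᵥ S *ᵥ (x - x₀)) / 2 := by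
  classical
  refine ⟨S⁻¹ *ᵥ w, fun x => ?_⟩
  set x₀ := S⁻¹ *ᵥ w
  have hSx₀ : S *ᵥ x₀ = w := by
    rw [Matrix.mulVec_mulVec, Matrix.mul_nonsing_inv _ hS.det_pos.ne'.isUnit, Matrix.one_mulVec]
  have hx₀S : x₀ ⬝ᵥ S *ᵥ x = w ⬝ᵥ x := by
    rw [Matrix.dotProduct_mulVec, ← Matrix.mulVec_transpose,
      ← Matrix.conjTranspose_eq_transpose_of_trivial, hS.isHermitian.eq, hSx₀]
  have max_nonpos := h x₀
  rw [hSx₀] at max_nonpos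
  simp only [Matrix.mulVec_sub, sub_dotProduct, dotProduct_sub, hSx₀, hx₀S,
    dotProduct_comm x w, dotProduct_comm x₀ w] at max_nonpos ⊢
  linarith

variable [DecidableEq ι]

lemma lintegral_stdGaussianDensity_mulVec_sub {L : Matrix ι ι ℝ} (hL : L.det ≠ 0) (c : ι → ℝ) :
    ∫⁻ x, ENNReal.ofReal (stdGaussianDensity (L *ᵥ x - c)) = ENNReal.ofReal |L.det⁻¹| := by
  let ρ : (ι → ℝ) → ENNReal := fun x => ENNReal.ofReal (stdGaussianDensity x)
  have lintegral_density : ∫⁻ x, ρ x = 1 := by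
    rw [← setLIntegral_univ, ← withDensity_apply _ MeasurableSet.univ,
      ← stdGaussianPi_eq_withDensity, measure_univ]
  have hL_meas : Measurable L.toLin' := L.toLin'.continuous_of_finiteDimensional.measurable
  calc ∫⁻ x, ρ (L *ᵥ x - c)
      = ∫⁻ z, ρ (z - c) ∂(volume.map L.toLin') :=
        (lintegral_map (measurable_ofReal_stdGaussianDensity.comp (measurable_sub_const c))
          hL_meas).symm
    _ = ENNReal.ofReal |L.det⁻¹| := by
        rw [Real.map_matrix_volume_pi_eq_smul_volume_pi hL, lintegral_smul_measure,
          lintegral_sub_right_eq_self ρ c, lintegral_density, smul_eq_mul, mul_one]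

open scoped MatrixOrder in
lemma lintegral_exp_quadratic_stdGaussianPi_le {S : Matrix ι ι ℝ} (hS : S.PosDef) {w : ι → ℝ}
    {k : ℝ} (h : ∀ x, w ⬝ᵥ x - x ⬝ᵥ S *ᵥ x / 2 + k ≤ 0) :
    ∫⁻ x, ENNReal.ofReal (Real.exp (x ⬝ᵥ x / 2 + (w ⬝ᵥ x - x ⬝ᵥ S *ᵥ x / 2 + k)))
      ∂(stdGaussianPi ι) ≤ ENNReal.ofReal (√S.det)⁻¹ := by
  obtain ⟨x₀, hx₀⟩ := exists_quadratic_le_neg_centered hS h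
  let L := CFC.sqrt S
  have hLL : L * L = S := CFC.sqrt_mul_sqrt_self S hS.posSemidef.nonneg
  have hLt : Lᵀ = L := by
    rw [← Matrix.conjTranspose_eq_transpose_of_trivial]
    exact (CFC.sqrt_nonneg S).isSelfAdjoint
  have hL_det : L.det = √S.det := by simpa using hS.posSemidef.det_sqrt
  have hL_sq (z : ι → ℝ) : L *ᵥ z ⬝ᵥ L *ᵥ z = z ⬝ᵥ S *ᵥ z := by
    rw [← hLL, ← Matrix.mulVec_mulVec, Matrix.dotProduct_mulVec z, ← Matrix.mulVec_transpose, hLt]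
  rw [stdGaussianPi_eq_withDensity, lintegral_withDensity_eq_lintegral_mul _
    measurable_ofReal_stdGaussianDensity (by fun_prop)]
  calc _ ≤ ∫⁻ x, ENNReal.ofReal (stdGaussianDensity (L *ᵥ x - L *ᵥ x₀)) := by
        refine lintegral_mono fun x => ?_
        rw [Pi.mul_apply, ← ENNReal.ofReal_mul' (Real.exp_nonneg _), stdGaussianDensity_eq_exp,
          stdGaussianDensity_eq_exp, mul_assoc, ← Real.exp_add, ← Matrix.mulVec_sub, hL_sq]
        gcongr
        linarith [hx₀ x]
    _ = ENNReal.ofReal (√S.det)⁻¹ := by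
        have hdet_pos : 0 < √S.det := Real.sqrt_pos.mpr hS.det_pos
        rw [lintegral_stdGaussianDensity_mulVec_sub (hL_det ▸ hdet_pos.ne'), hL_det,
          abs_of_pos (inv_pos.mpr hdet_pos)]

lemma exp_trace_le_det {S T : Matrix ι ι ℝ} (hS : S.IsHermitian)
    (h : ∀ q, q ⬝ᵥ q = 1 → Real.exp (q ⬝ᵥ T *ᵥ q) ≤ q ⬝ᵥ S *ᵥ q) :
    Real.exp T.trace ≤ S.det := by
  let q : ι → ι → ℝ := fun i => hS.eigenvectorBasis i
  have hq (i : ι) : q i ⬝ᵥ q i = 1 := by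
    have := hS.eigenvectorBasis.inner_eq_one i
    rwa [EuclideanSpace.inner_eq_star_dotProduct, star_trivial] at this
  have trace_eq : T.trace = ∑ i, q i ⬝ᵥ T *ᵥ q i := by
    rw [← Matrix.trace_toLin_eq T (EuclideanSpace.basisFun ι ℝ).toBasis,
      ← Matrix.toEuclideanLin_eq_toLin_orthonormal,
      LinearMap.trace_eq_sum_inner _ hS.eigenvectorBasis]
    exact sum_congr rfl fun i _ => Matrix.inner_toEuclideanCLM T _ _
  have det_eq : S.det = ∏ i, q i ⬝ᵥ S *ᵥ q i := by
    rw [hS.det_eq_prod_eigenvalues]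
    exact prod_congr rfl fun i _ => by simp [hS.eigenvalues_eq, q]
  rw [trace_eq, det_eq, Real.exp_sum]
  exact prod_le_prod (fun i _ => Real.exp_nonneg _) fun i _ => h _ (hq i)

end GaussianIntegral

section ChaosMoment

variable {ι : Type*} [Fintype ι] [DecidableEq ι]

/-- The precision matrix of the Gaussian integral `𝔼 exp (a (xᵀ(Bx + v) - ‖Bx + v‖² / 4))`. The
quadratic part of the exponent is completed through
`xᵀu - ‖u‖² / 4 = ‖x‖² - ‖x - u / 2‖²`, which makes positivity evident for `a < 1 / 2`. -/
def chaosPrecision (a : ℝ) (B : Matrix ι ι ℝ) : Matrix ι ι ℝ :=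
  (1 - 2 * a) • 1 + (2 * a) • ((1 - (1 / 2 : ℝ) • B)ᵀ * (1 - (1 / 2 : ℝ) • B))

variable {a : ℝ} (B : Matrix ι ι ℝ)

lemma dotProduct_chaosPrecision_mulVec (x : ι → ℝ) :
    x ⬝ᵥ chaosPrecision a B *ᵥ x =
      x ⬝ᵥ x - 2 * a * (x ⬝ᵥ B *ᵥ x) + a / 2 * (B *ᵥ x ⬝ᵥ B *ᵥ x) := by
  simp only [chaosPrecision, Matrix.add_mulVec, Matrix.smul_mulVec, Matrix.one_mulVec,
    ← Matrix.mulVec_mulVec, Matrix.sub_mulVec, dotProduct_add, dotProduct_smul, smul_eq_mul,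
    Matrix.dotProduct_mulVec x, Matrix.vecMul_transpose, sub_dotProduct, dotProduct_sub,
    smul_dotProduct]
  rw [← Matrix.dotProduct_mulVec, dotProduct_comm (B *ᵥ x) x]
  ring

lemma posDef_chaosPrecision (ha : 0 ≤ a) (ha' : a < 1 / 2) : (chaosPrecision a B).PosDef := by
  refine Matrix.PosDef.add_posSemidef (Matrix.PosDef.one.smul (by linarith)) ?_
  rw [← Matrix.conjTranspose_eq_transpose_of_trivial]
  exact (Matrix.posSemidef_conjTranspose_mul_self _).smul (by linarith)

lemma exp_neg_le_one_sub_add_sq {t : ℝ} (ha : 0 ≤ a) (ha' : a ≤ 1 / 8)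
    (ht : 2 * a * |t| ≤ 1) : Real.exp (-(2 * a * t)) ≤ 1 - 2 * a * t + a / 2 * t ^ 2 := by
  have hexp := Real.abs_exp_sub_one_sub_id_le (x := -(2 * a * t))
    (by rwa [abs_neg, abs_mul, abs_of_nonneg (by positivity : 0 ≤ 2 * a)])
  have hsq : (2 * a * t) ^ 2 ≤ a / 2 * t ^ 2 := by
    calc (2 * a * t) ^ 2 = 4 * a * a * t ^ 2 := by ring
      _ ≤ a / 2 * t ^ 2 := by gcongr; nlinarith
  linarith [(abs_le.mp hexp).2, neg_sq (2 * a * t)]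

lemma exp_trace_le_det_chaosPrecision (ha : 0 ≤ a) (ha' : a ≤ 1 / 8)
    (hB : ∀ x, 2 * a * |x ⬝ᵥ B *ᵥ x| ≤ x ⬝ᵥ x) :
    Real.exp (-(2 * a * B.trace)) ≤ (chaosPrecision a B).det := by
  have htrace : -(2 * a * B.trace) = (-(2 * a) • B).trace := by
    rw [Matrix.trace_smul, smul_eq_mul, neg_mul]
  rw [htrace]
  refine exp_trace_le_det (posDef_chaosPrecision B ha (by linarith)).isHermitian fun q hq => ?_
  have cauchy_schwarz : (q ⬝ᵥ B *ᵥ q) ^ 2 ≤ B *ᵥ q ⬝ᵥ B *ᵥ q := by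
    have h := sum_mul_sq_le_sq_mul_sq univ q (B *ᵥ q)
    simp only [pow_two (q _), pow_two ((B *ᵥ q) _)] at h
    change (q ⬝ᵥ B *ᵥ q) ^ 2 ≤ (q ⬝ᵥ q) * (B *ᵥ q ⬝ᵥ B *ᵥ q) at h
    rwa [hq, one_mul] at h
  calc Real.exp (q ⬝ᵥ (-(2 * a) • B) *ᵥ q)
      = Real.exp (-(2 * a * (q ⬝ᵥ B *ᵥ q))) := by
        rw [Matrix.smul_mulVec, dotProduct_smul, smul_eq_mul, neg_mul]
    _ ≤ 1 - 2 * a * (q ⬝ᵥ B *ᵥ q) + a / 2 * (q ⬝ᵥ B *ᵥ q) ^ 2 :=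
        exp_neg_le_one_sub_add_sq ha ha' (hq ▸ hB q)
    _ ≤ 1 - 2 * a * (q ⬝ᵥ B *ᵥ q) + a / 2 * (B *ᵥ q ⬝ᵥ B *ᵥ q) := by gcongr
    _ = q ⬝ᵥ chaosPrecision a B *ᵥ q := by rw [dotProduct_chaosPrecision_mulVec, hq]

lemma chaos_exponent_eq (v x : ι → ℝ) :
    a * (x ⬝ᵥ (B *ᵥ x + v) - (B *ᵥ x + v) ⬝ᵥ (B *ᵥ x + v) / 4) =
      x ⬝ᵥ x / 2 + ((a • ((1 - (1 / 2 : ℝ) • B)ᵀ *ᵥ v)) ⬝ᵥ x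
        - x ⬝ᵥ chaosPrecision a B *ᵥ x / 2 + -(a / 4 * (v ⬝ᵥ v))) := by
  rw [dotProduct_chaosPrecision_mulVec, smul_dotProduct, Matrix.mulVec_transpose,
    ← Matrix.dotProduct_mulVec]
  simp only [Matrix.sub_mulVec, Matrix.one_mulVec, Matrix.smul_mulVec, dotProduct_sub,
    dotProduct_smul, dotProduct_add, add_dotProduct, smul_eq_mul, dotProduct_comm (B *ᵥ x) v,
    dotProduct_comm x v]
  ring

lemma quadratic_chaosPrecision_nonpos (ha : 0 ≤ a) (ha' : a ≤ 1 / 2) (v x : ι → ℝ) :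
    (a • ((1 - (1 / 2 : ℝ) • B)ᵀ *ᵥ v)) ⬝ᵥ x - x ⬝ᵥ chaosPrecision a B *ᵥ x / 2
      + -(a / 4 * (v ⬝ᵥ v)) ≤ 0 := by
  have hexp := chaos_exponent_eq (a := a) B v x
  set u := B *ᵥ x + v
  have complete_square :
      a * (x ⬝ᵥ u - u ⬝ᵥ u / 4) - x ⬝ᵥ x / 2 =
        -((1 / 2 - a) * (x ⬝ᵥ x)) - a * ((x - (1 / 2 : ℝ) • u) ⬝ᵥ (x - (1 / 2 : ℝ) • u)) := by
    simp only [sub_dotProduct, dotProduct_sub, smul_dotProduct, dotProduct_smul, smul_eq_mul,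
      dotProduct_comm u x]
    ring
  have hx := mul_nonneg (sub_nonneg.mpr ha') (dotProduct_self_star_nonneg x)
  have hxu := mul_nonneg ha (dotProduct_self_star_nonneg (x - (1 / 2 : ℝ) • u))
  rw [star_trivial] at hx hxu
  linarith

end ChaosMoment

section PenalizedChaos

variable {ι : Type*} [Fintype ι]

lemma lintegral_exp_chaos_le_one {a : ℝ} (ha : 0 ≤ a) (ha' : a ≤ 1 / 8) {B : Matrix ι ι ℝ}
    (hB : ∀ x, 2 * a * |x ⬝ᵥ B *ᵥ x| ≤ x ⬝ᵥ x) (v : ι → ℝ) :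
    ∫⁻ x, ENNReal.ofReal (Real.exp (a * (x ⬝ᵥ (B *ᵥ x + v) - (B *ᵥ x + v) ⬝ᵥ (B *ᵥ x + v) / 4)
      - a * B.trace)) ∂(stdGaussianPi ι) ≤ 1 := by
  classical
  have sqrt_det_bound : Real.exp (-(a * B.trace)) ≤ √(chaosPrecision a B).det :=
    Real.le_sqrt_of_sq_le <| by
      rw [← Real.exp_nat_mul]
      convert exp_trace_le_det_chaosPrecision B ha ha' hB using 2
      push_cast
      ring
  simp only [chaos_exponent_eq, sub_eq_neg_add _ (a * B.trace), Real.exp_add (-(a * B.trace)),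
    ENNReal.ofReal_mul (Real.exp_nonneg (-(a * B.trace)))]
  rw [lintegral_const_mul' _ _ ENNReal.ofReal_ne_top]
  calc _ ≤ ENNReal.ofReal (Real.exp (-(a * B.trace)))
        * ENNReal.ofReal (√(chaosPrecision a B).det)⁻¹ := by
        gcongr
        exact lintegral_exp_quadratic_stdGaussianPi_le (posDef_chaosPrecision B ha (by linarith))
          (quadratic_chaosPrecision_nonpos B ha (by linarith) v)
    _ ≤ 1 := by
        rw [← ENNReal.ofReal_mul (Real.exp_nonneg _), ← div_eq_mul_inv, ENNReal.ofReal_le_one]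
        exact div_le_one_of_le₀ sqrt_det_bound (Real.sqrt_nonneg _)

/-- The order-two Gaussian chaos `2 xᵀu - 2σ² Tr B` with `u = Bx + v`, compensated by `-‖u‖² / 2`.
For `B = Aₖ - A_j` and `u = μ̂ₖ - μ̂_j` it is the stochastic part of the difference of the losses of
two affine estimators. -/
def penalizedChaos (σ : ℝ) (B : Matrix ι ι ℝ) (v x : ι → ℝ) : ℝ :=
  2 * (x ⬝ᵥ (B *ᵥ x + v)) - 2 * σ ^ 2 * B.trace - (B *ᵥ x + v) ⬝ᵥ (B *ᵥ x + v) / 2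

lemma continuous_penalizedChaos (σ : ℝ) (B : Matrix ι ι ℝ) (v : ι → ℝ) :
    Continuous (penalizedChaos σ B v) := by
  unfold penalizedChaos
  fun_prop

lemma penalizedChaos_smul {σ : ℝ} (hσ : σ ≠ 0) (B : Matrix ι ι ℝ) (v x : ι → ℝ) :
    penalizedChaos σ B v (σ • x) = σ ^ 2 * penalizedChaos 1 B (σ⁻¹ • v) x := by
  have factor : B *ᵥ (σ • x) + v = σ • (B *ᵥ x + σ⁻¹ • v) := by
    rw [smul_add, smul_smul, mul_inv_cancel₀ hσ, one_smul, Matrix.mulVec_smul]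
  simp only [penalizedChaos, factor, smul_dotProduct, dotProduct_smul, smul_eq_mul]
  ring

lemma penalizedChaos_zero_zero_le (B : Matrix ι ι ℝ) (v : ι → ℝ) :
    penalizedChaos 0 B v 0 ≤ 0 := by
  have hv := dotProduct_self_star_nonneg v
  rw [star_trivial] at hv
  simp only [penalizedChaos, Matrix.mulVec_zero, zero_add, zero_dotProduct]
  linarith

lemma measure_lt_le_of_lintegral_exp_le_one {α : Type*} [MeasurableSpace α] {μ : Measure α}
    {Y : α → ℝ} (hY : AEMeasurable Y μ) (h : ∫⁻ x, ENNReal.ofReal (Real.exp (Y x)) ∂μ ≤ 1)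
    (t : ℝ) : μ {x | t < Y x} ≤ ENNReal.ofReal (Real.exp (-t)) := by
  have exp_pos : 0 < ENNReal.ofReal (Real.exp t) := ENNReal.ofReal_pos.mpr (Real.exp_pos t)
  calc μ {x | t < Y x}
      ≤ μ {x | ENNReal.ofReal (Real.exp t) ≤ ENNReal.ofReal (Real.exp (Y x))} :=
        measure_mono fun x hx => ENNReal.ofReal_le_ofReal (Real.exp_le_exp.mpr (le_of_lt hx))
    _ ≤ (∫⁻ x, ENNReal.ofReal (Real.exp (Y x)) ∂μ) / ENNReal.ofReal (Real.exp t) :=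
        meas_ge_le_lintegral_div (by fun_prop) exp_pos.ne' ENNReal.ofReal_ne_top
    _ ≤ 1 / ENNReal.ofReal (Real.exp t) := by gcongr
    _ = ENNReal.ofReal (Real.exp (-t)) := by
        rw [Real.exp_neg, ENNReal.ofReal_inv_of_pos (Real.exp_pos t), one_div]

variable {K : ℝ}

lemma stdGaussianPi_lt_penalizedChaos_le (hK : 16 ≤ K) {B : Matrix ι ι ℝ}
    (hB : ∀ x, |x ⬝ᵥ B *ᵥ x| ≤ K / 4 * (x ⬝ᵥ x)) (v : ι → ℝ) (t : ℝ) :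
    stdGaussianPi ι {x | K * t < penalizedChaos 1 B v x} ≤ ENNReal.ofReal (Real.exp (-t)) := by
  have hK0 : 0 < K := by linarith
  have moment : ∫⁻ x, ENNReal.ofReal (Real.exp (penalizedChaos 1 B v x / K))
      ∂(stdGaussianPi ι) ≤ 1 := by
    have hscale (x : ι → ℝ) : 2 * (2 / K) * |x ⬝ᵥ B *ᵥ x| ≤ x ⬝ᵥ x := by
      have := mul_le_mul_of_nonneg_left (hB x) (by positivity : 0 ≤ 4 / K)
      field_simp at this ⊢
      linarith
    have ha : 2 / K ≤ 1 / 8 := by rw [div_le_div_iff₀ hK0 (by norm_num)]; linarith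
    convert lintegral_exp_chaos_le_one (by positivity) ha hscale v using 5 with x
    rw [penalizedChaos]
    ring
  simpa only [lt_div_iff₀' hK0] using
    measure_lt_le_of_lintegral_exp_le_one
      ((continuous_penalizedChaos 1 B v).measurable.div_const K).aemeasurable moment t

lemma gaussPi_eq_map_stdGaussianPi (n : ℕ) (σ : ℝ) :
    gaussPi n σ = (stdGaussianPi (Fin n)).map fun x => σ • x := by
  have h := Measure.pi_map_pi (μ := fun _ : Fin n => gaussianReal 0 1)
    (f := fun _ x => σ * x) fun _ => by fun_prop
  simp only [gaussianReal_map_const_mul, mul_zero, mul_one] at h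
  exact h.symm

lemma gaussPi_lt_penalizedChaos_le {n : ℕ} (σ : ℝ) (hK : 16 ≤ K) {B : Matrix (Fin n) (Fin n) ℝ}
    (hB : ∀ x, |x ⬝ᵥ B *ᵥ x| ≤ K / 4 * (x ⬝ᵥ x)) (v : Fin n → ℝ) (t : ℝ) :
    gaussPi n σ {x | K * σ ^ 2 * t < penalizedChaos σ B v x} ≤
      ENNReal.ofReal (Real.exp (-t)) := by
  have hmeas : MeasurableSet {x | K * σ ^ 2 * t < penalizedChaos σ B v x} :=
    measurableSet_lt measurable_const (continuous_penalizedChaos σ B v).measurable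
  rw [gaussPi_eq_map_stdGaussianPi, Measure.map_apply (by fun_prop) hmeas]
  rcases eq_or_ne σ 0 with rfl | hσ
  · have empty : (fun x : Fin n → ℝ => (0 : ℝ) • x) ⁻¹'
        {x | K * 0 ^ 2 * t < penalizedChaos 0 B v x} = ∅ := by
      ext x
      simpa using penalizedChaos_zero_zero_le B v
    rw [empty, measure_empty]
    exact zero_le
  · refine (measure_mono fun x hx => ?_).trans
      (stdGaussianPi_lt_penalizedChaos_le hK hB (σ⁻¹ • v) t)
    rw [Set.mem_preimage, Set.mem_ofPred_eq, penalizedChaos_smul hσ] at hx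
    refine lt_of_mul_lt_mul_left (a := σ ^ 2) ?_ (by positivity)
    linarith

end PenalizedChaos

section SquaredNorm

variable {n : ℕ}

lemma sqNorm_eq_dotProduct (v : Fin n → ℝ) : sqNorm v = v ⬝ᵥ v :=
  sum_congr rfl fun _ _ => pow_two _

lemma sqNorm_eq_norm_sq (v : Fin n → ℝ) : sqNorm v = ‖WithLp.toLp 2 v‖ ^ 2 :=
  (EuclideanSpace.real_norm_sq_eq _).symm

lemma opNorm_eq_norm_toEuclideanCLM (A : Matrix (Fin n) (Fin n) ℝ) :
    opNorm A = ‖Matrix.toEuclideanCLM (𝕜 := ℝ) A‖ := by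
  rw [opNorm, ← ContinuousLinearMap.sSup_unitClosedBall_eq_norm]
  simp only [sqNorm_eq_norm_sq, Real.sqrt_sq (norm_nonneg _), sq_le_one_iff₀ (norm_nonneg _)]
  congr 1
  ext c
  constructor
  · rintro ⟨x, hx, rfl⟩
    exact ⟨WithLp.toLp 2 x, mem_closedBall_zero_iff.mpr hx, rfl⟩
  · rintro ⟨x, hx, rfl⟩
    exact ⟨x.ofLp, mem_closedBall_zero_iff.mp hx, rfl⟩

lemma abs_dotProduct_mulVec_le (A : Matrix (Fin n) (Fin n) ℝ) (x : Fin n → ℝ) :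
    |x ⬝ᵥ A *ᵥ x| ≤ opNorm A * (x ⬝ᵥ x) := by
  let z : EuclideanSpace ℝ (Fin n) := WithLp.toLp 2 x
  calc |x ⬝ᵥ A *ᵥ x| = |inner ℝ z (Matrix.toEuclideanCLM (𝕜 := ℝ) A z)| := by
        rw [Matrix.inner_toEuclideanCLM]
    _ ≤ ‖z‖ * (opNorm A * ‖z‖) := by
        rw [opNorm_eq_norm_toEuclideanCLM]
        exact (abs_real_inner_le_norm _ _).trans
          (mul_le_mul_of_nonneg_left (ContinuousLinearMap.le_opNorm _ _) (norm_nonneg z))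
    _ = opNorm A * (x ⬝ᵥ x) := by
        rw [← sqNorm_eq_dotProduct, sqNorm_eq_norm_sq]
        ring

lemma abs_dotProduct_sub_mulVec_le (A A' : Matrix (Fin n) (Fin n) ℝ) (x : Fin n → ℝ) :
    |x ⬝ᵥ (A - A') *ᵥ x| ≤ (opNorm A + opNorm A') * (x ⬝ᵥ x) := by
  rw [Matrix.sub_mulVec, dotProduct_sub, add_mul]
  exact (abs_sub _ _).trans
    (add_le_add (abs_dotProduct_mulVec_le A x) (abs_dotProduct_mulVec_le A' x))

lemma sqNorm_neg (v : Fin n → ℝ) : sqNorm (-v) = sqNorm v := by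
  simp only [sqNorm, Pi.neg_apply, neg_sq]

lemma sqNorm_sub (u v : Fin n → ℝ) :
    sqNorm (u - v) = sqNorm u - 2 * (u ⬝ᵥ v) + sqNorm v := by
  simp only [sqNorm_eq_dotProduct, sub_dotProduct, dotProduct_sub, dotProduct_comm v u]
  ring

lemma dotProduct_linearCombination {κ : Type*} [Fintype κ] (m : κ → Fin n → ℝ) (θ : κ → ℝ)
    (u : Fin n → ℝ) :
    u ⬝ᵥ Fintype.linearCombination ℝ m θ = ∑ k, θ k * (u ⬝ᵥ m k) := by
  simp only [Fintype.linearCombination_apply, dotProduct_sum, dotProduct_smul, smul_eq_mul]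

lemma sum_mul_sqNorm_sub_eq {κ : Type*} [Fintype κ] (m : κ → Fin n → ℝ) {θ : κ → ℝ}
    (hθ : ∑ k, θ k = 1) (c : Fin n → ℝ) :
    ∑ k, θ k * sqNorm (c - m k) =
      ∑ k, θ k * sqNorm (m k) - 2 * (c ⬝ᵥ Fintype.linearCombination ℝ m θ) + sqNorm c := by
  rw [dotProduct_linearCombination, mul_sum, ← one_mul (sqNorm c), ← hθ, sum_mul,
    ← sum_sub_distrib, ← sum_add_distrib]
  exact sum_congr rfl fun k _ => by rw [sqNorm_sub]; ring

lemma add_half_sqNorm_sub_le_of_isMinOn {E : Type*} [AddCommGroup E] [Module ℝ E] {s : Set E}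
    (hs : Convex ℝ s) (L : E →ₗ[ℝ] Fin n → ℝ) (ℓ : E →ₗ[ℝ] ℝ) {θ θ' : E} (hθ : θ ∈ s)
    (hθ' : θ' ∈ s) (hmin : IsMinOn (fun η => sqNorm (L η) / 2 + ℓ η) s θ) :
    sqNorm (L θ) / 2 + ℓ θ + sqNorm (L θ' - L θ) / 2 ≤ sqNorm (L θ') / 2 + ℓ θ' := by
  set gap := sqNorm (L θ') / 2 + ℓ θ' - (sqNorm (L θ) / 2 + ℓ θ)
  have on_segment (t : ℝ) (ht : t ∈ Set.Ioo 0 1) :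
      (1 - t) * (sqNorm (L θ' - L θ) / 2) ≤ gap := by
    have hle := isMinOn_iff.mp hmin _
      (hs hθ hθ' (sub_nonneg.mpr ht.2.le) ht.1.le (sub_add_cancel 1 t))
    have expand : sqNorm (L ((1 - t) • θ + t • θ')) / 2 + ℓ ((1 - t) • θ + t • θ') =
        sqNorm (L θ) / 2 + ℓ θ + t * (gap - (1 - t) * (sqNorm (L θ' - L θ) / 2)) := by
      simp only [map_add, map_smul, gap, sqNorm_eq_dotProduct, add_dotProduct, dotProduct_add,
        smul_dotProduct, dotProduct_smul, sub_dotProduct, dotProduct_sub, smul_eq_mul,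
        dotProduct_comm (L θ') (L θ)]
      ring
    rw [expand, le_add_iff_nonneg_right] at hle
    exact sub_nonneg.mp ((mul_nonneg_iff_of_pos_left ht.1).mp hle)
  have hlim : Filter.Tendsto (fun t : ℝ => (1 - t) * (sqNorm (L θ' - L θ) / 2)) (𝓝[>] 0)
      (𝓝 ((1 - 0) * (sqNorm (L θ' - L θ) / 2))) :=
    (Continuous.tendsto (by fun_prop) 0).mono_left nhdsWithin_le_nhds
  have hgap := le_of_tendsto hlim
    (Filter.eventually_of_mem (Ioo_mem_nhdsGT one_pos) on_segment)
  simp only [gap] at hgap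
  linarith

end SquaredNorm

section Aggregation

variable {n M : ℕ} (A : Fin M → Matrix (Fin n) (Fin n) ℝ) (b : Fin M → Fin n → ℝ)

/-- The affine estimator `μ̂_j = A_j y + b_j`. -/
def affineEstimator (y : Fin n → ℝ) (j : Fin M) : Fin n → ℝ := A j *ᵥ y + b j

/-- The coefficient of `θ_j` in `H_pen(θ) - ‖μ̂_θ‖² / 2`, which is linear on the simplex. -/
def hpenSlope (σ : ℝ) (y : Fin n → ℝ) (j : Fin M) : ℝ :=
  sqNorm (affineEstimator A b y j) / 2 - 2 * (y ⬝ᵥ affineEstimator A b y j)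
    + 2 * σ ^ 2 * (A j).trace

/-- The compensated chaos governing the loss of `μ̂_k` relative to that of `μ̂_j`, as a function of
the noise vector. -/
def pairChaos (σ : ℝ) (f : Fin n → ℝ) (k j : Fin M) : (Fin n → ℝ) → ℝ :=
  penalizedChaos σ (A k - A j) ((A k - A j) *ᵥ f + (b k - b j))

variable {A b} {σ : ℝ} {y f : Fin n → ℝ} {θ : Fin M → ℝ}

lemma muV_eq_linearCombination :
    muV A b y θ = Fintype.linearCombination ℝ (affineEstimator A b y) θ := rfl

lemma muV_single (j : Fin M) : muV A b y (Pi.single j 1) = affineEstimator A b y j := by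
  rw [muV_eq_linearCombination, Fintype.linearCombination_apply_single, one_smul]

lemma pen_add_sqNorm_sub (hθ : ∑ j, θ j = 1) (c : Fin n → ℝ) :
    pen A b y θ + sqNorm (c - muV A b y θ) = ∑ j, θ j * sqNorm (c - affineEstimator A b y j) := by
  change ∑ j, θ j * sqNorm (muV A b y θ - affineEstimator A b y j) + _ = _
  rw [sum_mul_sqNorm_sub_eq _ hθ, sum_mul_sqNorm_sub_eq _ hθ, ← muV_eq_linearCombination,
    sqNorm_sub, ← sqNorm_eq_dotProduct]
  ring

lemma pen_single (j : Fin M) : pen A b y (Pi.single j 1) = 0 := by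
  rw [pen, Fintype.sum_eq_single j fun k hk => by rw [Pi.single_eq_of_ne hk, zero_mul],
    muV_single, affineEstimator, sub_self]
  simp [sqNorm]

lemma Hpen_eq_half_sqNorm_add_linearCombination (hθ : ∑ j, θ j = 1) :
    Hpen A b σ y θ =
      sqNorm (Fintype.linearCombination ℝ (affineEstimator A b y) θ) / 2
        + Fintype.linearCombination ℝ (hpenSlope A b σ y) θ := by
  have hpen := pen_add_sqNorm_sub (A := A) (b := b) (y := y) hθ 0
  have hlin : Fintype.linearCombination ℝ (hpenSlope A b σ y) θ =
      (∑ j, θ j * sqNorm (affineEstimator A b y j)) / 2 - 2 * (y ⬝ᵥ muV A b y θ)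
        + 2 * σ ^ 2 * ∑ j, θ j * (A j).trace := by
    rw [muV_eq_linearCombination, dotProduct_linearCombination, Fintype.linearCombination_apply,
      mul_sum, mul_sum, sum_div, ← sum_sub_distrib, ← sum_add_distrib]
    exact sum_congr rfl fun j _ => by rw [smul_eq_mul, hpenSlope]; ring
  simp only [zero_sub, sqNorm_neg] at hpen
  rw [hlin, ← hpen, ← muV_eq_linearCombination, Hpen, Cp, dotProduct]
  ring

lemma Hpen_add_half_sqNorm_sub_le_of_isMinOn {θ' : Fin M → ℝ} (hθ : θ ∈ simplex M)
    (hθ' : θ' ∈ simplex M) (hmin : IsMinOn (Hpen A b σ y) (simplex M) θ) :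
    Hpen A b σ y θ + sqNorm (muV A b y θ' - muV A b y θ) / 2 ≤ Hpen A b σ y θ' := by
  rw [Hpen_eq_half_sqNorm_add_linearCombination hθ.2,
    Hpen_eq_half_sqNorm_add_linearCombination hθ'.2]
  refine add_half_sqNorm_sub_le_of_isMinOn (convex_stdSimplex ℝ (Fin M)) _ _ hθ hθ'
    (isMinOn_iff.mpr fun η hη => ?_)
  rw [← Hpen_eq_half_sqNorm_add_linearCombination hθ.2,
    ← Hpen_eq_half_sqNorm_add_linearCombination hη.2]
  exact isMinOn_iff.mp hmin η hη

lemma Cp_add_half_sum_mul_sqNorm_sub_le_of_isMinOn (hθ : θ ∈ simplex M)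
    (hmin : IsMinOn (Hpen A b σ y) (simplex M) θ) (j : Fin M) :
    Cp A b σ y θ
        + (∑ k, θ k * sqNorm (affineEstimator A b y j - affineEstimator A b y k)) / 2 ≤
      Cp A b σ y (Pi.single j 1) := by
  have growth := Hpen_add_half_sqNorm_sub_le_of_isMinOn hθ (single_mem_stdSimplex ℝ j) hmin
  rw [Hpen, Hpen, pen_single, muV_single] at growth
  rw [← pen_add_sqNorm_sub hθ.2]
  linarith

lemma sqNorm_muV_sub_eq (f ξ : Fin n → ℝ) (θ : Fin M → ℝ) :
    sqNorm (muV A b (f + ξ) θ - f) =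
      Cp A b σ (f + ξ) θ + 2 * (ξ ⬝ᵥ muV A b (f + ξ) θ) - 2 * σ ^ 2 * ∑ k, θ k * (A k).trace
        + sqNorm f := by
  rw [sqNorm_sub, dotProduct_comm, Cp]
  change _ = sqNorm (muV A b (f + ξ) θ) - 2 * ((f + ξ) ⬝ᵥ muV A b (f + ξ) θ) + _ + _ - _ + _
  rw [add_dotProduct]
  ring

lemma measurable_pairChaos (σ : ℝ) (f : Fin n → ℝ) (k j : Fin M) :
    Measurable (pairChaos A b σ f k j) :=
  (continuous_penalizedChaos _ _ _).measurable

lemma gaussPi_lt_pairChaos_le {K : ℝ} (hK : 16 ≤ K) {k j : Fin M} (hk : opNorm (A k) ≤ K / 8)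
    (hj : opNorm (A j) ≤ K / 8) (σ : ℝ) (f : Fin n → ℝ) (t : ℝ) :
    gaussPi n σ {z | K * σ ^ 2 * t < pairChaos A b σ f k j z} ≤ ENNReal.ofReal (Real.exp (-t)) :=
  gaussPi_lt_penalizedChaos_le σ hK (fun z => (abs_dotProduct_sub_mulVec_le _ _ z).trans <|
    mul_le_mul_of_nonneg_right (by linarith) (by simpa using dotProduct_self_star_nonneg z)) _ t

lemma pairChaos_eq (f ξ : Fin n → ℝ) (k j : Fin M) :
    pairChaos A b σ f k j ξ =
      2 * (ξ ⬝ᵥ affineEstimator A b (f + ξ) k - ξ ⬝ᵥ affineEstimator A b (f + ξ) j)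
        - 2 * σ ^ 2 * ((A k).trace - (A j).trace)
        - sqNorm (affineEstimator A b (f + ξ) j - affineEstimator A b (f + ξ) k) / 2 := by
  have hdiff : (A k - A j) *ᵥ ξ + ((A k - A j) *ᵥ f + (b k - b j)) =
      affineEstimator A b (f + ξ) k - affineEstimator A b (f + ξ) j := by
    simp only [affineEstimator, Matrix.sub_mulVec, Matrix.mulVec_add]
    abel
  rw [pairChaos, penalizedChaos, hdiff, dotProduct_sub, Matrix.trace_sub, ← sqNorm_eq_dotProduct,
    ← sqNorm_neg, neg_sub]

lemma sum_mul_pairChaos_eq (hθ : ∑ k, θ k = 1) (f ξ : Fin n → ℝ) (j : Fin M) :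
    ∑ k, θ k * pairChaos A b σ f k j ξ =
      2 * (ξ ⬝ᵥ muV A b (f + ξ) θ - ξ ⬝ᵥ affineEstimator A b (f + ξ) j)
        - 2 * σ ^ 2 * (∑ k, θ k * (A k).trace - (A j).trace)
        - (∑ k, θ k * sqNorm
            (affineEstimator A b (f + ξ) j - affineEstimator A b (f + ξ) k)) / 2 := by
  have hconst (c : ℝ) : c = ∑ k, θ k * c := by rw [← sum_mul, hθ, one_mul]
  rw [muV_eq_linearCombination, dotProduct_linearCombination,
    hconst (ξ ⬝ᵥ affineEstimator A b (f + ξ) j), hconst (A j).trace]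
  simp only [← sum_sub_distrib, mul_sum, sum_div]
  exact sum_congr rfl fun k _ => by rw [pairChaos_eq]; ring

lemma sqNorm_muV_sub_le_add_sum_pairChaos {ξ : Fin n → ℝ} (hθ : θ ∈ simplex M)
    (hmin : IsMinOn (Hpen A b σ (f + ξ)) (simplex M) θ) (j : Fin M) :
    sqNorm (muV A b (f + ξ) θ - f) ≤
      sqNorm (affineEstimator A b (f + ξ) j - f) + ∑ k, θ k * pairChaos A b σ f k j ξ := by
  have hvertex : ∑ k, (Pi.single j 1 : Fin M → ℝ) k * (A k).trace = (A j).trace := by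
    simp [Pi.single_apply]
  have hCp := Cp_add_half_sum_mul_sqNorm_sub_le_of_isMinOn hθ hmin j
  rw [← muV_single, sqNorm_muV_sub_eq (σ := σ), sqNorm_muV_sub_eq (σ := σ), hvertex, muV_single,
    sum_mul_pairChaos_eq hθ.2]
  linarith

lemma sqNorm_muV_sub_le_of_forall_pairChaos_le {ξ : Fin n → ℝ} {R : ℝ} (hθ : θ ∈ simplex M)
    (hmin : IsMinOn (Hpen A b σ (f + ξ)) (simplex M) θ) (j : Fin M)
    (hR : ∀ k, pairChaos A b σ f k j ξ ≤ R) :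
    sqNorm (muV A b (f + ξ) θ - f) ≤ sqNorm (A j *ᵥ (f + ξ) + b j - f) + R := by
  refine (sqNorm_muV_sub_le_add_sum_pairChaos hθ hmin j).trans (add_le_add_right ?_ _)
  calc ∑ k, θ k * pairChaos A b σ f k j ξ
      ≤ ∑ k, θ k * R := sum_le_sum fun k _ => mul_le_mul_of_nonneg_left (hR k) (hθ.1 k)
    _ = R := by rw [← sum_mul, hθ.2, one_mul]

end Aggregation

section Deviation

lemma sq_mul_exp_neg_two_mul_log_add_le (M : ℕ) (x : ℝ) :
    (M : ℝ) ^ 2 * Real.exp (-(2 * Real.log M + x)) ≤ Real.exp (-x) := by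
  rcases M.eq_zero_or_pos with rfl | hM
  · simpa using Real.exp_nonneg (-x)
  · have hlog : Real.exp (2 * Real.log M) = (M : ℝ) ^ 2 := by
      rw [← Nat.cast_ofNat, Real.exp_nat_mul, Real.exp_log (Nat.cast_pos.mpr hM)]
    rw [← hlog, ← Real.exp_add]
    exact (congrArg Real.exp (by ring)).le

lemma measure_iUnion_iUnion_le_exp_neg {Ω : Type*} [MeasurableSpace Ω] {P : Measure Ω} {M : ℕ}
    {x : ℝ} {bad : Fin M → Fin M → Set Ω}
    (hbad : ∀ k j, P (bad k j) ≤ ENNReal.ofReal (Real.exp (-(2 * Real.log M + x)))) :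
    P (⋃ k, ⋃ j, bad k j) ≤ ENNReal.ofReal (Real.exp (-x)) := by
  calc P (⋃ k, ⋃ j, bad k j) ≤ ∑ k, ∑ j, P (bad k j) :=
        (measure_iUnion_fintype_le _ _).trans
          (sum_le_sum fun k _ => measure_iUnion_fintype_le _ _)
    _ ≤ ∑ _k : Fin M, ∑ _j : Fin M, ENNReal.ofReal (Real.exp (-(2 * Real.log M + x))) :=
        sum_le_sum fun k _ => sum_le_sum fun j _ => hbad k j
    _ = ENNReal.ofReal ((M : ℝ) ^ 2 * Real.exp (-(2 * Real.log M + x))) := by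
        rw [ENNReal.ofReal_mul (by positivity), ENNReal.ofReal_pow (by positivity)]
        simp only [sum_const, card_univ, Fintype.card_fin, nsmul_eq_mul, ENNReal.ofReal_natCast]
        ring
    _ ≤ ENNReal.ofReal (Real.exp (-x)) :=
        ENNReal.ofReal_le_ofReal (sq_mul_exp_neg_two_mul_log_add_le M x)

lemma ofReal_one_sub_le_measure_of_compl_le {Ω : Type*} [MeasurableSpace Ω] {P : Measure Ω}
    [IsProbabilityMeasure P] {s : Set Ω} {p : ℝ} (hp : 0 ≤ p) (h : P sᶜ ≤ ENNReal.ofReal p) :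
    ENNReal.ofReal (1 - p) ≤ P s := by
  rw [ENNReal.ofReal_sub _ hp, ENNReal.ofReal_one, tsub_le_iff_right]
  calc 1 = P Set.univ := measure_univ.symm
    _ ≤ P s + P sᶜ := measure_univ_le_add_compl s
    _ ≤ P s + ENNReal.ofReal p := by gcongr

end Deviation

theorem sharp_oracle_inequality_deviation_general
    {n M : ℕ} {K : ℝ} (hK : 16 ≤ K) (σ : ℝ) (f : Fin n → ℝ)
    (A : Fin M → Matrix (Fin n) (Fin n) ℝ) (b : Fin M → Fin n → ℝ)
    (hop : ∀ j, opNorm (A j) ≤ K / 8)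
    {Ω : Type*} [MeasurableSpace Ω] (P : Measure Ω) [IsProbabilityMeasure P]
    (ξ : Ω → Fin n → ℝ) (hξ : HasLaw ξ (gaussPi n σ) P)
    (θhat : Ω → Fin M → ℝ)
    (hθmem : ∀ ω, θhat ω ∈ simplex M)
    (hθmin : ∀ ω, IsMinOn (Hpen A b σ (f + ξ ω)) (simplex M) (θhat ω)) (x : ℝ) :
    ENNReal.ofReal (1 - Real.exp (-x)) ≤
      P {ω | ∀ j, sqNorm (muV A b (f + ξ ω) (θhat ω) - f) ≤
          sqNorm (A j *ᵥ (f + ξ ω) + b j - f) + K * σ ^ 2 * (2 * Real.log M + x)} := by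
  let bad (k j : Fin M) : Set Ω :=
    {ω | K * σ ^ 2 * (2 * Real.log M + x) < pairChaos A b σ f k j (ξ ω)}
  have hbad (k j : Fin M) :
      P (bad k j) ≤ ENNReal.ofReal (Real.exp (-(2 * Real.log M + x))) :=
    (hξ.measure_eq (measurableSet_lt measurable_const (measurable_pairChaos σ f k j))).trans_le
      (gaussPi_lt_pairChaos_le hK (hop k) (hop j) σ f _)
  refine ofReal_one_sub_le_measure_of_compl_le (Real.exp_nonneg _)
    ((measure_mono fun ω hω => ?_).trans (measure_iUnion_iUnion_le_exp_neg hbad))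
  contrapose! hω
  simp only [bad, Set.mem_iUnion, Set.mem_ofPred_eq, not_exists, not_lt] at hω
  exact Set.notMem_compl_iff.mpr fun j =>
    sqNorm_muV_sub_le_of_forall_pairChaos_le (hθmem ω) (hθmin ω) j fun k => hω k j

/-- **Theorem 2.1 (main result), deviation bound.** -/
theorem sharp_oracle_inequality_deviation
    {n M : ℕ} (hM : 2 ≤ M) (σ : ℝ) (f : Fin n → ℝ)
    (A : Fin M → Matrix (Fin n) (Fin n) ℝ) (b : Fin M → Fin n → ℝ)
    (hop : ∀ j, opNorm (A j) ≤ 1)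
    {Ω : Type} [MeasurableSpace Ω] (P : Measure Ω) [IsProbabilityMeasure P]
    (ξ : Ω → Fin n → ℝ) (hξ : Measurable ξ) (hlaw : P.map ξ = gaussPi n σ)
    (θhat : Ω → Fin M → ℝ)
    (hθmem : ∀ ω, θhat ω ∈ simplex M)
    (hθmin : ∀ ω, ∀ θ ∈ simplex M,
      Hpen A b σ (f + ξ ω) (θhat ω) ≤ Hpen A b σ (f + ξ ω) θ) :
    ∀ x : ℝ, 0 < x →
      ENNReal.ofReal (1 - 2 * Real.exp (-x)) ≤
        P {ω | ∀ j, sqNorm (muV A b (f + ξ ω) (θhat ω) - f) ≤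
            sqNorm ((A j).mulVec (f + ξ ω) + b j - f)
              + 46 * σ ^ 2 * (2 * Real.log M + x)} := by
  intro x _
  have h := sharp_oracle_inequality_deviation_general (K := 46) (by norm_num) σ f A b
    (fun j => (hop j).trans (by norm_num)) P ξ ⟨hξ.aemeasurable, hlaw⟩ θhat hθmem hθmin x
  exact (ENNReal.ofReal_le_ofReal (by linarith [Real.exp_pos (-x)])).trans h

end
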